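/- arXiv:1701.03773 — 8 statements merged into one kernel-verified Lean document; each statement's English description precedes it below -/
import Mathlib

section
/- If Σ consists entirely of unary predicate symbols, then for a fixed variable x the image of the coalgebraic standard translation ST_x : CML_Λ(Σ) → CPL(Λ,Σ) is precisely the set of CPL(Λ,Σ) formulas that are equality-free, quantifier-free, and use no variable other than x (neither as term nor as comprehension variable). -/
namespace CPL

/-- A Λ-structure: a `Set`-endofunctor `T` together with a natural predicate lifting
for every modal operator. -/
structure LambdaStructure (Λ : Type) (ar : Λ → ℕ) : Type 1 where
  T : Type → Type
  map : {C D : Type} → (C → D) → T C → T D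
  lift : (ℓ : Λ) → (C : Type) → (Fin (ar ℓ) → Set C) → Set (T C)
  natural : ∀ {C D : Type} (f : C → D) (ℓ : Λ) (A : Fin (ar ℓ) → Set D) (t : T C),
      map f t ∈ lift ℓ D A ↔ t ∈ lift ℓ C fun i => f ⁻¹' A i

/-- Formulas of coalgebraic predicate logic `CPL(Λ,Σ)`. -/
inductive Formula (Λ : Type) (ar : Λ → ℕ) (Sig : Type) (arP : Sig → ℕ) (V : Type) : Type
  | eq : V → V → Formula Λ ar Sig arP V
  | pred : (P : Sig) → (Fin (arP P) → V) → Formula Λ ar Sig arP V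
  | bot : Formula Λ ar Sig arP V
  | imp : Formula Λ ar Sig arP V → Formula Λ ar Sig arP V → Formula Λ ar Sig arP V
  | all : V → Formula Λ ar Sig arP V → Formula Λ ar Sig arP V
  | heart : V → (ℓ : Λ) → (Fin (ar ℓ) → V) → (Fin (ar ℓ) → Formula Λ ar Sig arP V) →
      Formula Λ ar Sig arP V

variable {Λ : Type} {ar : Λ → ℕ} {Sig : Type} {arP : Sig → ℕ} {V : Type}

def Formula.notF (φ : Formula Λ ar Sig arP V) : Formula Λ ar Sig arP V := φ.imp .bot

def Formula.orF (φ ψ : Formula Λ ar Sig arP V) : Formula Λ ar Sig arP V := (φ.imp .bot).imp ψ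

def Formula.andF (φ ψ : Formula Λ ar Sig arP V) : Formula Λ ar Sig arP V := (φ.imp ψ.notF).notF

def Formula.iffF (φ ψ : Formula Λ ar Sig arP V) : Formula Λ ar Sig arP V :=
  (φ.imp ψ).andF (ψ.imp φ)

def Formula.exF (x : V) (φ : Formula Λ ar Sig arP V) : Formula Λ ar Sig arP V :=
  (Formula.all x φ.notF).notF

def bigOr (l : List (Formula Λ ar Sig arP V)) : Formula Λ ar Sig arP V :=
  l.foldr Formula.orF .bot

def bigAnd (l : List (Formula Λ ar Sig arP V)) : Formula Λ ar Sig arP V :=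
  l.foldr Formula.andF (Formula.bot.notF)

def allList (ys : List V) (φ : Formula Λ ar Sig arP V) : Formula Λ ar Sig arP V :=
  ys.foldr Formula.all φ

def exList (ys : List V) (φ : Formula Λ ar Sig arP V) : Formula Λ ar Sig arP V :=
  ys.foldr Formula.exF φ

/-- Free variables of a CPL formula. -/
def Formula.freeVars : Formula Λ ar Sig arP V → Set V
  | .eq a b => {a, b}
  | .pred _ xs => Set.range xs
  | .bot => ∅
  | .imp φ ψ => φ.freeVars ∪ ψ.freeVars
  | .all x φ => φ.freeVars \ {x}
  | .heart x _ ys φs => insert x (⋃ i, ((φs i).freeVars \ {ys i}))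

variable [DecidableEq V]

/-- Substitution `φ[t/x]` of the variable `t` for the variable `x` (terms are variables). -/
def Formula.subst : Formula Λ ar Sig arP V → V → V → Formula Λ ar Sig arP V
  | .eq a b, t, x => .eq (if a = x then t else a) (if b = x then t else b)
  | .pred P xs, t, x => .pred P fun i => if xs i = x then t else xs i
  | .bot, _, _ => .bot
  | .imp φ ψ, t, x => .imp (φ.subst t x) (ψ.subst t x)
  | .all y φ, t, x => if y = x then .all y φ else .all y (φ.subst t x)
  | .heart z ℓ ys φs, t, x =>
      .heart (if z = x then t else z) ℓ ys fun i => if ys i = x then φs i else (φs i).subst t x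

/-- Substitutability of the variable `t` for the variable `x` (Enderton-style). -/
def Formula.Substitutable (t x : V) : Formula Λ ar Sig arP V → Prop
  | .eq _ _ => True
  | .pred _ _ => True
  | .bot => True
  | .imp φ ψ => φ.Substitutable t x ∧ ψ.Substitutable t x
  | .all y φ => t ∉ (Formula.all y φ).freeVars ∨ (t ≠ y ∧ φ.Substitutable t x)
  | .heart _ _ ys φs =>
      ∀ i, t ∉ ((φs i).freeVars \ {ys i}) ∨ (t ≠ ys i ∧ (φs i).Substitutable t x)

/-- Satisfaction in a coalgebraic model (given by a coalgebra `γ` and an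
interpretation `I` of the predicate symbols). -/
def Sat (S : LambdaStructure Λ ar) {C : Type} (γ : C → S.T C)
    (I : (P : Sig) → (Fin (arP P) → C) → Prop) :
    (V → C) → Formula Λ ar Sig arP V → Prop
  | v, .eq a b => v a = v b
  | v, .pred P xs => I P fun i => v (xs i)
  | _, .bot => False
  | v, .imp φ ψ => Sat S γ I v φ → Sat S γ I v ψ
  | v, .all x φ => ∀ c : C, Sat S γ I (Function.update v x c) φ
  | v, .heart x ℓ ys φs =>
      γ (v x) ∈ S.lift ℓ C fun i => {c : C | Sat S γ I (Function.update v (ys i) c) (φs i)}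


/-- Boolean (propositional) formulas over a set `α` of atoms. -/
inductive PropForm (α : Type) : Type
  | var : α → PropForm α
  | bot : PropForm α
  | imp : PropForm α → PropForm α → PropForm α

namespace PropForm

def neg {α : Type} (A : PropForm α) : PropForm α := A.imp .bot

def orP {α : Type} (A B : PropForm α) : PropForm α := (A.imp .bot).imp B

def vars {α : Type} : PropForm α → Set α
  | .var a => {a}
  | .bot => ∅
  | .imp A B => A.vars ∪ B.vars

def bind {α β : Type} (f : α → PropForm β) : PropForm α → PropForm β
  | .var a => f a
  | .bot => .bot
  | .imp A B => .imp (A.bind f) (B.bind f)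

end PropForm

/-- Evaluation of Boolean formulas in the Boolean algebra `𝒫 C`. -/
def pEval {α C : Type} (f : α → Set C) : PropForm α → Set C
  | .var a => f a
  | .bot => ∅
  | .imp A B => (pEval f A)ᶜ ∪ pEval f B

/-- Evaluation of Boolean formulas under a valuation of atoms by propositions. -/
def pHolds {α : Type} (w : α → Prop) : PropForm α → Prop
  | .var a => w a
  | .bot => False
  | .imp A B => pHolds w A → pHolds w B

/-- A modal literal `♥ p₁ … pₙ` over schematic variables. -/
abbrev ModalLit (Λ : Type) (ar : Λ → ℕ) (sVar : Type) : Type := (ℓ : Λ) × (Fin (ar ℓ) → sVar)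

/-- A one-step rule `A / P`, with `P` represented as a list of signed modal literals. -/
structure OneStepRule (Λ : Type) (ar : Λ → ℕ) (sVar : Type) : Type where
  prem : PropForm sVar
  lits : List (Bool × ModalLit Λ ar sVar)

variable {Λ : Type} {ar : Λ → ℕ} {sVar : Type}

/-- Well-formedness of one-step rules: every schematic variable occurs at most once in the
conclusion, and every schematic variable of the premise occurs in the conclusion. -/
def OneStepRule.WF (R : OneStepRule Λ ar sVar) : Prop :=
  ((R.lits.map fun l => List.ofFn l.2.2).flatten).Nodup ∧
    R.prem.vars ⊆ {p | ∃ l ∈ R.lits, ∃ j, l.2.2 j = p}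

def litSet (S : LambdaStructure Λ ar) (C : Type) (τ : sVar → Set C)
    (l : Bool × ModalLit Λ ar sVar) : Set (S.T C) :=
  if l.1 then S.lift l.2.1 C (fun j => τ (l.2.2 j)) else (S.lift l.2.1 C (fun j => τ (l.2.2 j)))ᶜ

/-- One-step soundness of a one-step rule. -/
def OneStepSound (S : LambdaStructure Λ ar) (R : OneStepRule Λ ar sVar) : Prop :=
  ∀ (C : Type) (τ : sVar → Set C), pEval τ R.prem = Set.univ →
    (⋃ l ∈ R.lits, litSet S C τ l) = Set.univ

/-- `♥` is `k`-bounded in its `i`-th argument. -/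
def BoundedAt (S : LambdaStructure Λ ar) (ℓ : Λ) (i : Fin (ar ℓ)) (k : ℕ) : Prop :=
  ∀ (C : Type) (A : Fin (ar ℓ) → Set C) (t : S.T C),
    t ∈ S.lift ℓ C A ↔
      ∃ B : Set C, B ⊆ A i ∧ B.Finite ∧ B.ncard ≤ k ∧ t ∈ S.lift ℓ C (Function.update A i B)



section CMLpart

/-- Formulas of coalgebraic modal logic `CML_Λ(Σ)`. -/
inductive CML (Λ : Type) (ar : Λ → ℕ) (Sig : Type) : Type
  | pred : Sig → CML Λ ar Sig
  | bot : CML Λ ar Sig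
  | imp : CML Λ ar Sig → CML Λ ar Sig → CML Λ ar Sig
  | heart : (ℓ : Λ) → (Fin (ar ℓ) → CML Λ ar Sig) → CML Λ ar Sig

/-- Modal satisfaction `𝔐, c ⊨ φ` of a CML formula at a state `c`. -/
def MSat (S : LambdaStructure Λ ar) {C : Type} (γ : C → S.T C)
    (I : (P : Sig) → (Fin 1 → C) → Prop) : C → CML Λ ar Sig → Prop
  | c, .pred P => I P fun _ => c
  | _, .bot => False
  | c, .imp φ ψ => MSat S γ I c φ → MSat S γ I c ψ
  | c, .heart ℓ φs => γ c ∈ S.lift ℓ C fun i => {d : C | MSat S γ I d (φs i)}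

variable [DecidableEq V]

/-- The coalgebraic standard translation `ST_x : CML_Λ(Σ) → CPL(Λ,Σ)`. -/
def ST (x : V) : CML Λ ar Sig → Formula Λ ar Sig (fun _ => 1) V
  | .pred P => .pred P (fun _ => x)
  | .bot => .bot
  | .imp φ ψ => .imp (ST x φ) (ST x ψ)
  | .heart ℓ φs => .heart x ℓ (fun _ => x) (fun i => ST x (φs i))

end CMLpart


section Image

/-- A CPL formula is equality-free. -/
def Formula.EqFree : Formula Λ ar Sig arP V → Prop
  | .eq _ _ => False
  | .pred _ _ => True
  | .bot => True
  | .imp φ ψ => φ.EqFree ∧ ψ.EqFree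
  | .all _ φ => φ.EqFree
  | .heart _ _ _ φs => ∀ i, (φs i).EqFree

/-- A CPL formula is quantifier-free. -/
def Formula.QFree : Formula Λ ar Sig arP V → Prop
  | .eq _ _ => True
  | .pred _ _ => True
  | .bot => True
  | .imp φ ψ => φ.QFree ∧ ψ.QFree
  | .all _ _ => False
  | .heart _ _ _ φs => ∀ i, (φs i).QFree

/-- A CPL formula uses no variable other than `x` (neither as a term, nor as a
comprehension or quantified variable). -/
def Formula.OnlyVar (x : V) : Formula Λ ar Sig arP V → Prop
  | .eq a b => a = x ∧ b = x
  | .pred _ xs => ∀ i, xs i = x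
  | .bot => True
  | .imp φ ψ => φ.OnlyVar x ∧ ψ.OnlyVar x
  | .all y φ => y = x ∧ φ.OnlyVar x
  | .heart z _ ys φs => z = x ∧ (∀ i, ys i = x) ∧ ∀ i, (φs i).OnlyVar x

/-- **Syntactic characterisation of the modal fragment** (Prop. 3.2): for `Σ` consisting
entirely of unary predicate symbols and a fixed variable `x`, the image of the coalgebraic
standard translation `ST_x` is precisely the set of CPL formulas that are equality-free,
quantifier-free, and use no variable other than `x`. -/
theorem ST_image [DecidableEq V] (x : V) (ψ : Formula Λ ar Sig (fun _ => 1) V) :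
    (∃ φ : CML Λ ar Sig, ST x φ = ψ) ↔ (ψ.EqFree ∧ ψ.QFree ∧ ψ.OnlyVar x) := by
  constructor
  · rintro ⟨φ, rfl⟩
    induction φ with
    | pred P => exact ⟨trivial, trivial, fun _ => rfl⟩
    | bot => exact ⟨trivial, trivial, trivial⟩
    | imp φ χ h1 h2 =>
      exact ⟨⟨h1.1, h2.1⟩, ⟨h1.2.1, h2.2.1⟩, ⟨h1.2.2, h2.2.2⟩⟩
    | heart ℓ φs ih =>
      exact ⟨fun i => (ih i).1, fun i => (ih i).2.1, rfl, fun _ => rfl, fun i => (ih i).2.2⟩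
  · induction ψ with
    | eq a b => exact fun h => h.1.elim
    | pred P xs =>
      rintro ⟨-, -, h⟩
      have hx : xs = fun _ => x := funext h
      subst hx
      exact ⟨.pred P, rfl⟩
    | bot => exact fun _ => ⟨.bot, rfl⟩
    | imp φ χ h1 h2 =>
      rintro ⟨⟨a1, a2⟩, ⟨b1, b2⟩, ⟨c1, c2⟩⟩
      obtain ⟨φ', rfl⟩ := h1 ⟨a1, b1, c1⟩
      obtain ⟨χ', rfl⟩ := h2 ⟨a2, b2, c2⟩
      exact ⟨.imp φ' χ', rfl⟩
    | all y φ ih => exact fun h => h.2.1.elim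
    | heart z ℓ ys φs ih =>
      rintro ⟨a, b, hz, hys, c⟩
      have hy : ys = fun _ => x := funext hys
      subst hy
      subst hz
      choose f hf using fun i => ih i ⟨a i, b i, c i⟩
      have hφ : φs = fun i => ST z (f i) := funext fun i => (hf i).symm
      subst hφ
      exact ⟨.heart ℓ f, rfl⟩

end Image

end CPL
end

section
/- The hybrid translation HT is truth-preserving: for every quantifier-free CPL(Λ,Σ) formula φ, every coalgebraic model 𝔐 = (C,γ,I), every assignment v of states to the variables, and every state c ∈ C: 𝔐, v, c ⊨ HT(φ) (in H_Λ(↓,@)) if and only if 𝔐, v ⊨ φ (in CPL). -/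
namespace CPL

variable {Λ : Type} {ar : Λ → ℕ} {Sig : Type} {arP : Sig → ℕ} {V : Type}

variable [DecidableEq V]

variable {Λ : Type} {ar : Λ → ℕ} {sVar : Type}

section Hybrid

/-- Coalgebraic hybrid formulas over world variables `W` (jumbo language containing
`@`, `↓`, the global modality `A` and quantification `∀` over world variables). -/
inductive Hyb (Λ : Type) (ar : Λ → ℕ) (Sig : Type) (W : Type) : Type
  | wvar : W → Hyb Λ ar Sig W
  | pred : Sig → Hyb Λ ar Sig W
  | bot : Hyb Λ ar Sig W
  | imp : Hyb Λ ar Sig W → Hyb Λ ar Sig W → Hyb Λ ar Sig W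
  | heart : (ℓ : Λ) → (Fin (ar ℓ) → Hyb Λ ar Sig W) → Hyb Λ ar Sig W
  | at_ : W → Hyb Λ ar Sig W → Hyb Λ ar Sig W
  | down : W → Hyb Λ ar Sig W → Hyb Λ ar Sig W
  | glob : Hyb Λ ar Sig W → Hyb Λ ar Sig W
  | hall : W → Hyb Λ ar Sig W → Hyb Λ ar Sig W

variable {W : Type}

/-- Hybrid satisfaction `𝔐, g, c ⊨ φ` relative to an assignment `g : W → C` of states to
world variables and a current state `c`. -/
def HSat [DecidableEq W] (S : LambdaStructure Λ ar) {C : Type} (γ : C → S.T C)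
    (I : (P : Sig) → (Fin 1 → C) → Prop) : (W → C) → C → Hyb Λ ar Sig W → Prop
  | g, c, .wvar z => g z = c
  | _, c, .pred P => I P fun _ => c
  | _, _, .bot => False
  | g, c, .imp φ ψ => HSat S γ I g c φ → HSat S γ I g c ψ
  | g, c, .heart ℓ φs => γ c ∈ S.lift ℓ C fun i => {d : C | HSat S γ I g d (φs i)}
  | g, _, .at_ z φ => HSat S γ I g (g z) φ
  | g, c, .down z φ => HSat S γ I (Function.update g z c) c φ
  | g, _, .glob φ => ∀ d : C, HSat S γ I g d φ
  | g, c, .hall z φ => ∀ d : C, HSat S γ I (Function.update g z d) c φ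

/-- Membership in the language `H_Λ(↓,@)`. -/
def Hyb.InDA : Hyb Λ ar Sig W → Prop
  | .wvar _ => True
  | .pred _ => True
  | .bot => True
  | .imp φ ψ => φ.InDA ∧ ψ.InDA
  | .heart _ φs => ∀ i, (φs i).InDA
  | .at_ _ φ => φ.InDA
  | .down _ φ => φ.InDA
  | .glob _ => False
  | .hall _ _ => False

/-- Membership in the language `H_Λ(↓,A)`. -/
def Hyb.InDG : Hyb Λ ar Sig W → Prop
  | .wvar _ => True
  | .pred _ => True
  | .bot => True
  | .imp φ ψ => φ.InDG ∧ ψ.InDG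
  | .heart _ φs => ∀ i, (φs i).InDG
  | .at_ _ _ => False
  | .down _ φ => φ.InDG
  | .glob φ => φ.InDG
  | .hall _ _ => False

/-- Membership in the language `H_Λ(∀,@)`. -/
def Hyb.InFA : Hyb Λ ar Sig W → Prop
  | .wvar _ => True
  | .pred _ => True
  | .bot => True
  | .imp φ ψ => φ.InFA ∧ ψ.InFA
  | .heart _ φs => ∀ i, (φs i).InFA
  | .at_ _ φ => φ.InFA
  | .down _ _ => False
  | .glob _ => False
  | .hall _ φ => φ.InFA

variable [DecidableEq W]

/-- The standard translation `ST_x` of hybrid logic into CPL over the individual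
variables `FoV = W ⊕ ℕ` (world variables are `Sum.inl`-variables; the `Sum.inr`-variables
serve as fresh comprehension variables, with the extra index `n` ensuring that the
comprehension variable `Sum.inr n` chosen at a modal operator is fresh). -/
def STh : ℕ → (W ⊕ ℕ) → Hyb Λ ar Sig W → Formula Λ ar Sig (fun _ => 1) (W ⊕ ℕ)
  | _, x, .wvar z => .eq x (Sum.inl z)
  | _, x, .pred P => .pred P (fun _ => x)
  | _, _, .bot => .bot
  | n, x, .imp φ ψ => .imp (STh n x φ) (STh n x ψ)
  | n, x, .heart ℓ φs =>
      .heart x ℓ (fun _ => Sum.inr n) (fun i => STh (n + 1) (Sum.inr n) (φs i))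
  | n, _, .at_ z φ => STh n (Sum.inl z) φ
  | n, x, .down z φ => (STh n x φ).subst x (Sum.inl z)
  | n, x, .glob φ => .all x (STh n x φ)
  | n, x, .hall z φ => .all (Sum.inl z) (STh n x φ)

end Hybrid

section HybridTranslation

/-- The hybrid translation `HT` of (quantifier-free) CPL into `H_Λ(↓,@)`:
`HT(P(x)) = @_x P`, `HT(x=y) = @_x y`, `HT(⊥) = ⊥`, `HT(φ→ψ) = HT(φ)→HT(ψ)`,
`HT(x♥⌈y₁:φ₁⌉…⌈yₙ:φₙ⌉) = @_x ♥(↓y₁.HT(φ₁),…,↓yₙ.HT(φₙ))`.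
(The value on `∀x.φ`, which is excluded by quantifier-freeness, is irrelevant.) -/
def HT : Formula Λ ar Sig (fun _ => 1) V → Hyb Λ ar Sig V
  | .eq a b => .at_ a (.wvar b)
  | .pred P xs => .at_ (xs 0) (.pred P)
  | .bot => .bot
  | .imp φ ψ => .imp (HT φ) (HT ψ)
  | .all _ _ => .bot
  | .heart x ℓ ys φs => .at_ x (.heart ℓ fun i => .down (ys i) (HT (φs i)))

/-- **Truth preservation of the hybrid translation `HT`** (Prop. 4.3): for every
quantifier-free CPL formula `φ`, coalgebraic model `𝔐`, assignment `v` of states to the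
variables, and state `c`:  `𝔐, v, c ⊨ HT(φ)` (in `H_Λ(↓,@)`) iff `𝔐, v ⊨ φ` (in CPL). -/
theorem HT_truth_preserving [DecidableEq V]
    (S : LambdaStructure Λ ar) {C : Type} (γ : C → S.T C)
    (I : (P : Sig) → (Fin 1 → C) → Prop)
    (φ : Formula Λ ar Sig (fun _ => 1) V) (hφ : φ.QFree)
    (v : V → C) (c : C) :
    HSat S γ I v c (HT φ) ↔ Sat S γ I v φ := by
  induction φ generalizing v c with
  | eq a b => simp only [HT, HSat, Sat]; exact eq_comm
  | pred P xs =>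
    have h : (fun i => v (xs i)) = fun _ => v (xs 0) := by
      funext i
      rw [Subsingleton.elim i 0]
    simp only [HT, HSat, Sat]
    rw [h]
  | bot => simp only [HT, HSat, Sat]
  | imp φ ψ ih1 ih2 =>
    simp only [HT, HSat, Sat]
    rw [ih1 hφ.1, ih2 hφ.2]
  | all x φ ih => exact hφ.elim
  | heart x l ys φs ih =>
    simp only [HT, HSat, Sat]
    have h : (fun i => {d : C | HSat S γ I (Function.update v (ys i) d) d (HT (φs i))}) =
        fun i => {d : C | Sat S γ I (Function.update v (ys i) d) (φs i)} := by
      funext i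
      ext d
      exact ih i (hφ i) _ d
    rw [h]

end HybridTranslation

end CPL
end

section
/- Whenever Σ consists purely of unary predicate symbols (and there are no function symbols), the coalgebraic hybrid language H_Λ(↓,@) is expressively equivalent to the quantifier-free fragment of CPL(Λ,Σ): every hybrid formula φ has a quantifier-free CPL formula (namely ST_x(φ)) with the same satisfaction at every model, assignment and state, and every quantifier-free CPL formula ψ has a hybrid formula (namely HT(ψ)) with the same satisfaction, assuming FoV contains WoV plus a disjoint infinite supply of additional comprehension variables. -/
namespace CPL

variable {Λ : Type} {ar : Λ → ℕ} {Sig : Type} {arP : Sig → ℕ} {V : Type}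

variable [DecidableEq V]

variable {Λ : Type} {ar : Λ → ℕ} {sVar : Type}

/-- The variable `t` is never bound in the formula. -/
def NoBind {V : Type} {arP : Sig → ℕ} (t : V) : Formula Λ ar Sig arP V → Prop
  | .eq _ _ => True
  | .pred _ _ => True
  | .bot => True
  | .imp φ ψ => NoBind t φ ∧ NoBind t ψ
  | .all y φ => y ≠ t ∧ NoBind t φ
  | .heart _ _ ys φs => ∀ i, ys i ≠ t ∧ NoBind t (φs i)

theorem noBind_subst {V : Type} [DecidableEq V] {arP : Sig → ℕ} (t a b : V)
    (φ : Formula Λ ar Sig arP V) (h : NoBind t φ) : NoBind t (φ.subst a b) := by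
  induction φ with
  | eq => trivial
  | pred => trivial
  | bot => trivial
  | imp φ ψ ih1 ih2 => exact ⟨ih1 h.1, ih2 h.2⟩
  | all y φ ih =>
    simp only [Formula.subst]
    split_ifs
    · exact h
    · exact ⟨h.1, ih h.2⟩
  | heart x l ys φs ih =>
    intro i
    refine ⟨(h i).1, ?_⟩
    dsimp only
    split_ifs
    · exact (h i).2
    · exact ih i (h i).2

theorem qfree_subst {V : Type} [DecidableEq V] {arP : Sig → ℕ} (a b : V)
    (φ : Formula Λ ar Sig arP V) (h : φ.QFree) : (φ.subst a b).QFree := by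
  induction φ with
  | eq => trivial
  | pred => trivial
  | bot => trivial
  | imp φ ψ ih1 ih2 => exact ⟨ih1 h.1, ih2 h.2⟩
  | all y φ ih => exact h.elim
  | heart x l ys φs ih =>
    intro i
    dsimp only
    split_ifs
    · exact h i
    · exact ih i (h i)

theorem sat_subst {V : Type} [DecidableEq V] {arP : Sig → ℕ}
    (S : LambdaStructure Λ ar) {C : Type} (γ : C → S.T C)
    (I : (P : Sig) → (Fin (arP P) → C) → Prop) (t x : V)
    (φ : Formula Λ ar Sig arP V) (h : NoBind t φ) (v : V → C) :
    Sat S γ I v (φ.subst t x) ↔ Sat S γ I (Function.update v x (v t)) φ := by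
  have key : ∀ (v : V → C) (a : V), v (if a = x then t else a) = Function.update v x (v t) a := by
    intro v a
    by_cases e : a = x <;> simp [e]
  have step : ∀ (v : V → C) (y : V) (c : C) (φ : Formula Λ ar Sig arP V), y ≠ t →
      (∀ v : V → C, Sat S γ I v (φ.subst t x) ↔ Sat S γ I (Function.update v x (v t)) φ) →
      (Sat S γ I (Function.update v y c) (if y = x then φ else φ.subst t x) ↔
        Sat S γ I (Function.update (Function.update v x (v t)) y c) φ) := by
    intro v y c φ hy ih
    split_ifs with e
    · subst e
      rw [Function.update_idem]
    · rw [ih, Function.update_of_ne (Ne.symm hy), Function.update_comm e]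
  induction φ generalizing v with
  | eq a b => simp only [Formula.subst, Sat, key]
  | pred P xs => simp only [Formula.subst, Sat, key]
  | bot => rfl
  | imp φ ψ ih1 ih2 => simp only [Formula.subst, Sat, ih1 h.1, ih2 h.2]
  | all y φ ih =>
    have := fun c => step v y c φ h.1 (ih h.2)
    simp only [Formula.subst]
    split_ifs with e
    · simp only [e, if_true] at this ⊢
      exact forall_congr' this
    · simp only [e, if_false] at this ⊢
      exact forall_congr' this
  | heart z l ys φs ih =>
    have := fun i c => step v (ys i) c (φs i) (h i).1 (ih i (h i).2)
    simp only [Formula.subst, Sat, key, this]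

theorem noBind_STh {W : Type} [DecidableEq W] (φ : Hyb Λ ar Sig W) (hφ : φ.InDA)
    (n : ℕ) (x t : W ⊕ ℕ) (ht : ∀ m, t = Sum.inr m → m < n) :
    NoBind t (STh n x φ) := by
  induction φ generalizing n x with
  | wvar => trivial
  | pred => trivial
  | bot => trivial
  | imp φ ψ ih1 ih2 => exact ⟨ih1 hφ.1 n x ht, ih2 hφ.2 n x ht⟩
  | heart l φs ih =>
    intro i
    refine ⟨fun e => (ht n e.symm).false, ih i (hφ i) _ _ fun m hm => ?_⟩
    have := ht m hm
    omega
  | at_ z φ ih => exact ih hφ _ _ ht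
  | down z φ ih => exact noBind_subst _ _ _ _ (ih hφ _ _ ht)
  | glob => exact hφ.elim
  | hall => exact hφ.elim

theorem qfree_STh {W : Type} [DecidableEq W] (φ : Hyb Λ ar Sig W) (hφ : φ.InDA)
    (n : ℕ) (x : W ⊕ ℕ) : (STh n x φ).QFree := by
  induction φ generalizing n x with
  | wvar => trivial
  | pred => trivial
  | bot => trivial
  | imp φ ψ ih1 ih2 => exact ⟨ih1 hφ.1 n x, ih2 hφ.2 n x⟩
  | heart l φs ih => exact fun i => ih i (hφ i) _ _
  | at_ z φ ih => exact ih hφ _ _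
  | down z φ ih => exact qfree_subst _ _ _ (ih hφ _ _)
  | glob => exact hφ.elim
  | hall => exact hφ.elim

theorem sat_STh {W : Type} [DecidableEq W] (S : LambdaStructure Λ ar)
    {C : Type} (γ : C → S.T C) (I : (P : Sig) → (Fin 1 → C) → Prop)
    (φ : Hyb Λ ar Sig W) (hφ : φ.InDA)
    (n : ℕ) (x : W ⊕ ℕ) (hx : ∀ m, x = Sum.inr m → m < n)
    (g : W → C) (v : W ⊕ ℕ → C) (hv : ∀ w, v (Sum.inl w) = g w) :
    HSat S γ I g (v x) φ ↔ Sat S γ I v (STh n x φ) := by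
  induction φ generalizing n x g v with
  | wvar z => simp only [HSat, STh, Sat, hv]; exact eq_comm
  | pred => rfl
  | bot => rfl
  | imp φ ψ ih1 ih2 =>
    simp only [HSat, STh, Sat, ih1 hφ.1 n x hx g v hv, ih2 hφ.2 n x hx g v hv]
  | heart l φs ih =>
    have key : ∀ i d, HSat S γ I g d (φs i) ↔
        Sat S γ I (Function.update v (Sum.inr n) d) (STh (n + 1) (Sum.inr n) (φs i)) := by
      intro i d
      rw [← ih i (hφ i) (n + 1) (Sum.inr n) _ g, Function.update_self]
      · intro w
        rw [Function.update_of_ne Sum.inl_ne_inr, hv]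
      · intro m hm
        have := Sum.inr.inj hm
        omega
    simp only [HSat, STh, Sat, key]
  | at_ z φ ih =>
    simp only [HSat, STh]
    rw [← hv z]
    exact ih hφ n (Sum.inl z) (fun m hm => by cases hm) g v hv
  | down z φ ih =>
    simp only [HSat, STh]
    rw [sat_subst S γ I x _ _ (noBind_STh φ hφ n x x hx),
      ← ih hφ n x hx (Function.update g z (v x))]
    · have : Function.update v (Sum.inl z) (v x) x = v x := by
        by_cases e : x = Sum.inl z
        · rw [e, Function.update_self]
        · rw [Function.update_of_ne e]
      rw [this]
    · intro w
      by_cases e : w = z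
      · subst e
        simp
      · rw [Function.update_of_ne e, Function.update_of_ne (fun h => e (Sum.inl.inj h)), hv]
  | glob => exact hφ.elim
  | hall => exact hφ.elim

theorem inDA_HT {V : Type} [DecidableEq V] (ψ : Formula Λ ar Sig (fun _ => 1) V)
    (h : ψ.QFree) : (HT ψ).InDA := by
  induction ψ with
  | eq => trivial
  | pred => trivial
  | bot => trivial
  | imp φ ψ ih1 ih2 => exact ⟨ih1 h.1, ih2 h.2⟩
  | all => exact h.elim
  | heart x l ys φs ih => exact fun i => ih i (h i)

theorem sat_HT {V : Type} [DecidableEq V] (S : LambdaStructure Λ ar)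
    {C : Type} (γ : C → S.T C) (I : (P : Sig) → (Fin 1 → C) → Prop)
    (ψ : Formula Λ ar Sig (fun _ => 1) V) (h : ψ.QFree) (v : V → C) (c : C) :
    HSat S γ I v c (HT ψ) ↔ Sat S γ I v ψ := by
  induction ψ generalizing v c with
  | eq => exact eq_comm
  | pred P xs =>
    simp only [HT, HSat, Sat]
    have : (fun _ : Fin 1 => v (xs 0)) = fun i => v (xs i) := by
      funext i
      rw [Subsingleton.elim i 0]
    rw [this]
  | bot => rfl
  | imp φ ψ ih1 ih2 => simp only [HT, HSat, Sat, ih1 h.1, ih2 h.2]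
  | all => exact h.elim
  | heart x l ys φs ih =>
    have := fun i => ih i (h i)
    simp only [HT, HSat, Sat, this]

/-- **Expressive equivalence of `H_Λ(↓,@)` and quantifier-free CPL** (Cor. 4.4): for `Σ`
consisting purely of unary predicate symbols (and no function symbols), and individual
variables `FoV = WoV ⊕ ℕ` (the world variables plus a disjoint infinite supply of
comprehension variables):
* every hybrid formula `φ` of `H_Λ(↓,@)` translates to the quantifier-free CPL formula
  `ST_x(φ)` with the same satisfaction at every model, assignment and state, and
* every quantifier-free CPL formula `ψ` translates to the hybrid formula `HT(ψ)` of
  `H_Λ(↓,@)` with the same satisfaction. -/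
theorem hybrid_downat_expressively_equivalent_qf {W : Type} [DecidableEq W]
    (S : LambdaStructure Λ ar) :
    (∀ (φ : Hyb Λ ar Sig W), φ.InDA →
      ∀ (n m : ℕ), m < n →
        (STh (ar := ar) n (Sum.inr m) φ).QFree ∧
        ∀ {C : Type} (γ : C → S.T C) (I : (P : Sig) → (Fin 1 → C) → Prop)
          (g : W → C) (c : C) (v : W ⊕ ℕ → C), (∀ w : W, v (Sum.inl w) = g w) →
          (HSat S γ I g c φ ↔
            Sat S γ I (Function.update v (Sum.inr m) c) (STh n (Sum.inr m) φ))) ∧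
    (∀ ψ : Formula Λ ar Sig (fun _ => 1) (W ⊕ ℕ), ψ.QFree →
      (HT ψ).InDA ∧
      ∀ {C : Type} (γ : C → S.T C) (I : (P : Sig) → (Fin 1 → C) → Prop)
        (v : W ⊕ ℕ → C) (c : C),
        (HSat S γ I v c (HT ψ) ↔ Sat S γ I v ψ)) := by
  refine ⟨fun φ hφ n m hm => ⟨qfree_STh φ hφ n _, ?_⟩,
    fun ψ hψ => ⟨inDA_HT ψ hψ, fun γ I v c => sat_HT S γ I ψ hψ v c⟩⟩
  intro C γ I g c v hv
  rw [← sat_STh S γ I φ hφ n (Sum.inr m) _ g, Function.update_self]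
  · intro w
    rw [Function.update_of_ne Sum.inl_ne_inr, hv]
  · intro k hk
    have := Sum.inr.inj hk
    omega

end CPL
end

section
/- Coalgebraic Łoś Theorem: If the coalgebraic model 𝔐 = (C,γ,V) is a quasi-ultraproduct of the coalgebraic models 𝔐_i = (C_i,γ_i,V_i) for the ultrafilter 𝔘 on I, then for every tuple (a¹,…,aⁿ) of states of C, where a^k = (a^k_i)_{i∈I}, and every CPL formula φ(x₁,…,xₙ): 𝔐 ⊨ φ(a¹,…,aⁿ) if and only if {i ∈ I | 𝔐_i ⊨ φ(a¹_i,…,aⁿ_i)} ∈ 𝔘. -/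
namespace CPL

variable {Λ : Type} {ar : Λ → ℕ} {Sig : Type} {arP : Sig → ℕ} {V : Type}

variable [DecidableEq V]

variable {Λ : Type} {ar : Λ → ℕ} {sVar : Type}

section Ultraproducts

variable {I : Type}

/-- The setoid underlying the ultraproduct `∏_𝔘 X_i`. -/
def upSetoid (𝔘 : Ultrafilter I) (X : I → Type) : Setoid (∀ i, X i) where
  r x y := {i | x i = y i} ∈ 𝔘
  iseqv := by
    refine ⟨fun x => ?_, fun {x y} h => ?_, fun {x y z} hxy hyz => ?_⟩
    · have : {i | x i = x i} = Set.univ := by ext i; simp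
      rw [this]; exact Filter.univ_mem
    · have : {i | x i = y i} = {i | y i = x i} := by ext i; exact eq_comm
      rwa [this] at h
    · exact Filter.mem_of_superset (Filter.inter_mem hxy hyz)
        (fun i hi => hi.1.trans hi.2)

/-- The ultraproduct `∏_𝔘 X_i` of a family of sets. -/
def UProd (𝔘 : Ultrafilter I) (X : I → Type) : Type := Quotient (upSetoid 𝔘 X)

/-- The equivalence class of a family. -/
def upMk (𝔘 : Ultrafilter I) (X : I → Type) (x : ∀ i, X i) : UProd 𝔘 X :=
  Quotient.mk (upSetoid 𝔘 X) x

/-- The admissible subset `∏_𝔘 A_i = {x | {i | x_i ∈ A_i} ∈ 𝔘}` of the ultraproduct. -/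
def admSet (𝔘 : Ultrafilter I) (X : I → Type) (A : ∀ i, Set (X i)) : Set (UProd 𝔘 X) :=
  {c | Quotient.liftOn c (fun x => {i | x i ∈ A i} ∈ 𝔘) (by
    intro x y h
    refine propext ⟨fun hx => ?_, fun hy => ?_⟩
    · refine Filter.mem_of_superset (Filter.inter_mem h hx) (fun i hi => ?_)
      have h1 : x i = y i := hi.1
      have h2 : x i ∈ A i := hi.2
      simpa [h1] using h2
    · refine Filter.mem_of_superset (Filter.inter_mem h hy) (fun i hi => ?_)
      have h1 : x i = y i := hi.1
      have h2 : y i ∈ A i := hi.2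
      simpa [h1] using h2)}

end Ultraproducts

section QuasiUltraproducts

variable {I : Type}

/-- `ξ` is a quasi-ultraproduct of the `T`-coalgebras `(X_i, ξ_i)` w.r.t. `𝔘`
(for a similarity type with unary operators): for every family of subsets `A_i ⊆ X_i`,
every `x ∈ ∏_𝔘 X_i` and every `♥ ∈ Λ`,
`ξ(x) ∈ ⟦♥⟧(∏_𝔘 A_i)` iff `{i | ξ_i(x_i) ∈ ⟦♥⟧(A_i)} ∈ 𝔘`. -/
def IsQUPCoalg (S : LambdaStructure Λ ar) (𝔘 : Ultrafilter I) (X : I → Type)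
    (ξi : ∀ i, X i → S.T (X i)) (ξ : UProd 𝔘 X → S.T (UProd 𝔘 X)) : Prop :=
  ∀ (A : ∀ i, Set (X i)) (x : ∀ i, X i) (ℓ : Λ),
    ξ (upMk 𝔘 X x) ∈ S.lift ℓ (UProd 𝔘 X) (fun _ => admSet 𝔘 X A) ↔
      {i | ξi i (x i) ∈ S.lift ℓ (X i) (fun _ => A i)} ∈ 𝔘

/-- The predicate interpretation `J` on the ultraproduct is the standard ultraproduct of
the component interpretations `I_i`. -/
def IsQUPPred (𝔘 : Ultrafilter I) (X : I → Type)
    (Ii : ∀ i, (P : Sig) → (Fin (arP P) → X i) → Prop)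
    (J : (P : Sig) → (Fin (arP P) → UProd 𝔘 X) → Prop) : Prop :=
  ∀ (P : Sig) (a : Fin (arP P) → ∀ i, X i),
    J P (fun j => upMk 𝔘 X (a j)) ↔ {i | Ii i P (fun j => a j i)} ∈ 𝔘

end QuasiUltraproducts

/-- **Coalgebraic Łoś Theorem** (Thm. 5.3): if the coalgebraic model `(∏_𝔘 X_i, ξ, J)` is a
quasi-ultraproduct of the coalgebraic models `(X_i, ξ_i, I_i)` for the ultrafilter `𝔘`, then
for every CPL formula `φ` and every tuple of states of the ultraproduct (given by a valuation
`a` into families), `φ` holds of the tuple in the ultraproduct iff it holds of its components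
`𝔘`-almost everywhere. -/
theorem coalgebraic_los [DecidableEq V] (S : LambdaStructure Λ ar)
    (hunary : ∀ ℓ : Λ, ar ℓ = 1)
    {I : Type} (𝔘 : Ultrafilter I) (X : I → Type) (hne : ∀ i, Nonempty (X i))
    (ξi : ∀ i, X i → S.T (X i))
    (Ii : ∀ i, (P : Sig) → (Fin (arP P) → X i) → Prop)
    (ξ : UProd 𝔘 X → S.T (UProd 𝔘 X))
    (J : (P : Sig) → (Fin (arP P) → UProd 𝔘 X) → Prop)
    (hcoalg : IsQUPCoalg S 𝔘 X ξi ξ)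
    (hpred : IsQUPPred 𝔘 X Ii J) :
    ∀ (φ : Formula Λ ar Sig arP V) (a : V → ∀ i, X i),
      Sat S ξ J (fun x => upMk 𝔘 X (a x)) φ ↔
        {i | Sat S (ξi i) (Ii i) (fun x => a x i) φ} ∈ 𝔘 := by
  have hup : ∀ (a : V → ∀ i, X i) (y : V) (c : ∀ i, X i),
      Function.update (fun x => upMk 𝔘 X (a x)) y (upMk 𝔘 X c) =
        fun x => upMk 𝔘 X (Function.update a y c x) := by
    intro a y c
    funext x
    by_cases h : x = y
    · subst h; simp
    · simp [h]
  have hup2 : ∀ (a : V → ∀ i, X i) (y : V) (c : ∀ i, X i) (i : I),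
      (fun x => Function.update a y c x i) =
        Function.update (fun x => a x i) y (c i) := by
    intro a y c i
    funext x
    by_cases h : x = y
    · subst h; simp
    · simp [h]
  intro φ
  induction φ with
  | eq x y =>
    intro a
    simp only [Sat]
    exact Quotient.eq (r := upSetoid 𝔘 X)
  | pred P xs =>
    intro a
    simp only [Sat]
    exact hpred P fun j => a (xs j)
  | bot =>
    intro a
    simp only [Sat]
    simp
  | imp φ ψ ih1 ih2 =>
    intro a
    simp only [Sat]
    rw [ih1, ih2]
    exact Ultrafilter.eventually_imp.symm
  | all y φ ih =>
    intro a
    simp only [Sat]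
    have key : ∀ c : ∀ i, X i,
        Sat S ξ J (Function.update (fun x => upMk 𝔘 X (a x)) y (upMk 𝔘 X c)) φ ↔
        {i | Sat S (ξi i) (Ii i) (Function.update (fun x => a x i) y (c i)) φ} ∈ 𝔘 := by
      intro c
      rw [hup, ih]
      simp only [hup2]
    constructor
    · intro h
      have hc : ∀ i, ∃ c : X i,
          Sat S (ξi i) (Ii i) (Function.update (fun x => a x i) y c) φ →
          ∀ d, Sat S (ξi i) (Ii i) (Function.update (fun x => a x i) y d) φ := by
        intro i
        by_cases hh : ∀ d, Sat S (ξi i) (Ii i) (Function.update (fun x => a x i) y d) φ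
        · exact ⟨(hne i).some, fun _ => hh⟩
        · obtain ⟨d, hd⟩ := not_forall.mp hh
          exact ⟨d, fun h => absurd h hd⟩
      choose c hc using hc
      exact Filter.mem_of_superset ((key c).mp (h _)) fun i hi => hc i hi
    · intro h c
      induction c using Quotient.inductionOn with
      | h c => exact (key c).mpr (Filter.mem_of_superset h fun i hi => hi (c i))
  | heart x ℓ ys φs ih =>
    intro a
    simp only [Sat]
    have j0 : Fin (ar ℓ) := ⟨0, by rw [hunary]; exact Nat.one_pos⟩
    have hs : Subsingleton (Fin (ar ℓ)) := by rw [hunary]; infer_instance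
    have h := hcoalg (fun i => {c | Sat S (ξi i) (Ii i)
      (Function.update (fun x => a x i) (ys j0) c) (φs j0)}) (a x) ℓ
    have e1 : (fun j => {c : UProd 𝔘 X | Sat S ξ J
          (Function.update (fun x => upMk 𝔘 X (a x)) (ys j) c) (φs j)}) =
        fun _ => admSet 𝔘 X (fun i => {c | Sat S (ξi i) (Ii i)
          (Function.update (fun x => a x i) (ys j0) c) (φs j0)}) := by
      funext j
      obtain rfl := Subsingleton.elim j j0
      ext c
      induction c using Quotient.inductionOn with
      | h c =>
        change Sat S ξ J (Function.update (fun x => upMk 𝔘 X (a x)) (ys j) (upMk 𝔘 X c)) (φs j) ↔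
          {i | Sat S (ξi i) (Ii i) (Function.update (fun x => a x i) (ys j) (c i)) (φs j)} ∈ 𝔘
        rw [hup, ih]
        simp only [hup2]
    have e2 : ∀ i, (fun j => {c : X i | Sat S (ξi i) (Ii i)
          (Function.update (fun x => a x i) (ys j) c) (φs j)}) =
        fun _ => {c | Sat S (ξi i) (Ii i)
          (Function.update (fun x => a x i) (ys j0) c) (φs j0)} := by
      intro i
      funext j
      obtain rfl := Subsingleton.elim j j0
      rfl
    simp only [e1, e2]
    exact h

end CPL
end

section
/- If a Λ-structure (with all operators unary) is one-step compact, then it has quasi-ultraproducts: for every ultrafilter 𝔘 on a set I and every family (X_i, ξ_i)_{i∈I} of T-coalgebras on nonempty sets X_i, there exists a T-coalgebra structure ξ on the ultraproduct ∏_𝔘 X_i making it a quasi-ultraproduct of the family. -/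
namespace CPL

variable {Λ : Type} {ar : Λ → ℕ} {Sig : Type} {arP : Sig → ℕ} {V : Type}

variable [DecidableEq V]

variable {Λ : Type} {ar : Λ → ℕ} {sVar : Type}

section OneStepCompactness

/-- Satisfaction of a one-step formula (a Boolean combination of expressions `♥A`, `A ⊆ X`)
by an element `t ∈ TX` (unary operators). -/
def osSat (S : LambdaStructure Λ ar) (X : Type) (t : S.T X) (A : PropForm (Λ × Set X)) :
    Prop :=
  t ∈ pEval (fun l => S.lift l.1 X fun _ => l.2) A

/-- A `Λ`-structure is one-step compact: every finitely satisfiable set of one-step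
formulas over any set `X` is satisfiable. -/
def OneStepCompact (S : LambdaStructure Λ ar) : Prop :=
  ∀ (X : Type) (Φ : Set (PropForm (Λ × Set X))),
    (∀ Φ₀ ⊆ Φ, Φ₀.Finite → ∃ t : S.T X, ∀ A ∈ Φ₀, osSat S X t A) →
    ∃ t : S.T X, ∀ A ∈ Φ, osSat S X t A

/-- Satisfaction of a finitary one-step formula (atoms `♥B` with `B ⊆ X` finite). -/
def osSatFin (S : LambdaStructure Λ ar) (X : Type) (t : S.T X)
    (A : PropForm (Λ × Finset X)) : Prop :=
  t ∈ pEval (fun l => S.lift l.1 X fun _ => (l.2 : Set X)) A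

/-- A `Λ`-structure is finitary one-step compact: every finitely satisfiable set of
one-step formulas over finite subsets of any set `X` is satisfiable. -/
def FinitaryOneStepCompact (S : LambdaStructure Λ ar) : Prop :=
  ∀ (X : Type) (Φ : Set (PropForm (Λ × Finset X))),
    (∀ Φ₀ ⊆ Φ, Φ₀.Finite → ∃ t : S.T X, ∀ A ∈ Φ₀, osSatFin S X t A) →
    ∃ t : S.T X, ∀ A ∈ Φ, osSatFin S X t A

end OneStepCompactness

open Classical in
/-- The literal describing the required behaviour at `x`. -/
noncomputable def qupLit (S : LambdaStructure Λ ar) {I : Type} (𝔘 : Ultrafilter I)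
    (X : I → Type) (ξi : ∀ i, X i → S.T (X i)) (x : ∀ i, X i)
    (k : (∀ i, Set (X i)) × Λ) : PropForm (Λ × Set (UProd 𝔘 X)) :=
  if {i | ξi i (x i) ∈ S.lift k.2 (X i) (fun _ => k.1 i)} ∈ 𝔘 then
    .var (k.2, admSet 𝔘 X k.1) else .neg (.var (k.2, admSet 𝔘 X k.1))

theorem osSat_qupLit (S : LambdaStructure Λ ar) {I : Type} (𝔘 : Ultrafilter I)
    (X : I → Type) (ξi : ∀ i, X i → S.T (X i)) (x : ∀ i, X i)
    (k : (∀ i, Set (X i)) × Λ) (t : S.T (UProd 𝔘 X)) :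
    osSat S (UProd 𝔘 X) t (qupLit S 𝔘 X ξi x k) ↔
      (t ∈ S.lift k.2 (UProd 𝔘 X) (fun _ => admSet 𝔘 X k.1) ↔
        {i | ξi i (x i) ∈ S.lift k.2 (X i) (fun _ => k.1 i)} ∈ 𝔘) := by
  unfold qupLit osSat
  split_ifs with h
  · simp only [pEval, h, iff_true]
  · simp only [PropForm.neg, pEval, h, iff_false, Set.union_empty, Set.mem_compl_iff]

theorem qup_finsat (S : LambdaStructure Λ ar) {I : Type} (𝔘 : Ultrafilter I)
    (X : I → Type) (hne : ∀ i, Nonempty (X i)) (ξi : ∀ i, X i → S.T (X i)) (x : ∀ i, X i)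
    (F : Set ((∀ i, Set (X i)) × Λ)) (hF : F.Finite) :
    ∃ t : S.T (UProd 𝔘 X), ∀ k ∈ F,
      (t ∈ S.lift k.2 (UProd 𝔘 X) (fun _ => admSet 𝔘 X k.1) ↔
        {i | ξi i (x i) ∈ S.lift k.2 (X i) (fun _ => k.1 i)} ∈ 𝔘) := by
  have : Finite F := hF
  have h1 : ∀ σ : Set F, ∀ᶠ i in (𝔘 : Filter I),
      (∃ y : X i, ∀ k : F, y ∈ k.1.1 i ↔ k ∈ σ) →
        ∃ c : UProd 𝔘 X, ∀ k : F, c ∈ admSet 𝔘 X k.1.1 ↔ k ∈ σ := by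
    intro σ
    rcases 𝔘.eventually_or.1 (Filter.Eventually.of_forall fun i =>
      Classical.em (∃ y : X i, ∀ k : F, y ∈ k.1.1 i ↔ k ∈ σ)) with h | h
    · have hc : ∃ c : UProd 𝔘 X, ∀ k : F, c ∈ admSet 𝔘 X k.1.1 ↔ k ∈ σ := by
        have hy : ∀ i, ∃ y : X i, (∃ y : X i, ∀ k : F, y ∈ k.1.1 i ↔ k ∈ σ) →
            ∀ k : F, y ∈ k.1.1 i ↔ k ∈ σ := by
          intro i
          by_cases hi : ∃ y : X i, ∀ k : F, y ∈ k.1.1 i ↔ k ∈ σ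
          · obtain ⟨y, hy⟩ := hi
            exact ⟨y, fun _ => hy⟩
          · exact ⟨(hne i).some, fun h' => absurd h' hi⟩
        choose y hy using hy
        refine ⟨upMk 𝔘 X y, fun k => ?_⟩
        change (∀ᶠ i in (𝔘 : Filter I), y i ∈ k.1.1 i) ↔ _
        constructor
        · intro h'
          obtain ⟨i, hi, hi'⟩ := (h.and h').exists
          exact (hy i hi k).1 hi'
        · intro hk
          filter_upwards [h] with i hi
          exact (hy i hi k).2 hk
      exact Filter.Eventually.of_forall fun _ _ => hc
    · filter_upwards [h] with i hi h'
      exact absurd h' hi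
  have h2 : ∀ k : F, ∀ᶠ i in (𝔘 : Filter I),
      (ξi i (x i) ∈ S.lift k.1.2 (X i) (fun _ => k.1.1 i) ↔
        {i | ξi i (x i) ∈ S.lift k.1.2 (X i) (fun _ => k.1.1 i)} ∈ 𝔘) := by
    intro k
    by_cases h : {i | ξi i (x i) ∈ S.lift k.1.2 (X i) (fun _ => k.1.1 i)} ∈ 𝔘
    · filter_upwards [h] with i hi
      exact ⟨fun _ => h, fun _ => hi⟩
    · filter_upwards [Ultrafilter.compl_mem_iff_notMem.2 h] with i hi
      exact ⟨fun h' => absurd h' hi, fun h' => absurd h' h⟩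
  obtain ⟨i, hi1, hi2⟩ := ((Filter.eventually_all.2 h1).and (Filter.eventually_all.2 h2)).exists
  have hf : ∀ y : X i, ∃ c : UProd 𝔘 X, ∀ k : F, c ∈ admSet 𝔘 X k.1.1 ↔ y ∈ k.1.1 i :=
    fun y => hi1 {k | y ∈ k.1.1 i} ⟨y, fun _ => Iff.rfl⟩
  choose f hf using hf
  refine ⟨S.map f (ξi i (x i)), fun k hk => ?_⟩
  rw [S.natural, ← hi2 ⟨k, hk⟩]
  have : f ⁻¹' admSet 𝔘 X k.1 = k.1 i := by
    ext y
    exact hf y ⟨k, hk⟩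
  rw [this]

theorem qup_point (S : LambdaStructure Λ ar) (hcompact : OneStepCompact S)
    {I : Type} (𝔘 : Ultrafilter I)
    (X : I → Type) (hne : ∀ i, Nonempty (X i)) (ξi : ∀ i, X i → S.T (X i)) (x : ∀ i, X i) :
    ∃ t : S.T (UProd 𝔘 X), ∀ k : (∀ i, Set (X i)) × Λ,
      (t ∈ S.lift k.2 (UProd 𝔘 X) (fun _ => admSet 𝔘 X k.1) ↔
        {i | ξi i (x i) ∈ S.lift k.2 (X i) (fun _ => k.1 i)} ∈ 𝔘) := by
  obtain ⟨t, ht⟩ := hcompact (UProd 𝔘 X) (Set.range (qupLit S 𝔘 X ξi x)) (by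
    intro Φ₀ hsub hfin
    rw [← Set.image_univ] at hsub
    obtain ⟨F, -, hF, rfl⟩ := (Set.exists_subset_image_finite_and
      (p := fun s => s = Φ₀)).1 ⟨Φ₀, hsub, hfin, rfl⟩
    obtain ⟨t, ht⟩ := qup_finsat S 𝔘 X hne ξi x F hF
    refine ⟨t, ?_⟩
    rintro _ ⟨k, hk, rfl⟩
    exact (osSat_qupLit S 𝔘 X ξi x k t).2 (ht k hk))
  exact ⟨t, fun k => (osSat_qupLit S 𝔘 X ξi x k t).1 (ht _ ⟨k, rfl⟩)⟩

/-- **Existence of quasi-ultraproducts under one-step compactness** (Thm. 5.6): if a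
`Λ`-structure (with all operators unary) is one-step compact, then for every ultrafilter `𝔘`
on a set `I` and every family of `T`-coalgebras on nonempty sets there is a coalgebra
structure on the ultraproduct making it a quasi-ultraproduct. -/
theorem qup_exists_of_onestep_compact (S : LambdaStructure Λ ar)
    (hunary : ∀ ℓ : Λ, ar ℓ = 1)
    (hcompact : OneStepCompact S)
    {I : Type} (𝔘 : Ultrafilter I) (X : I → Type) (hne : ∀ i, Nonempty (X i))
    (ξi : ∀ i, X i → S.T (X i)) :
    ∃ ξ : UProd 𝔘 X → S.T (UProd 𝔘 X), IsQUPCoalg S 𝔘 X ξi ξ := by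
  choose g hg using qup_point S hcompact 𝔘 X hne ξi
  refine ⟨fun c => g (Quotient.out c), fun A x ℓ => ?_⟩
  have hx : ∀ᶠ i in (𝔘 : Filter I), (Quotient.out (upMk 𝔘 X x)) i = x i :=
    Quotient.exact (Quotient.out_eq (upMk 𝔘 X x))
  refine (hg _ (A, ℓ)).trans ?_
  refine Filter.eventually_congr ?_
  filter_upwards [hx] with i hi
  rw [hi]

end CPL
end

section
/- If a Λ-structure (with all operators unary) is finitary one-step compact and every operator ♥ ∈ Λ is k_♥-bounded for some k_♥ ∈ ℕ, then it has quasi-ultraproducts: for every ultrafilter 𝔘 on a set I and every family (X_i, ξ_i)_{i∈I} of T-coalgebras on nonempty sets X_i, there exists a T-coalgebra structure ξ on the ultraproduct ∏_𝔘 X_i making it a quasi-ultraproduct of the family. -/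
namespace CPL

variable {Λ : Type} {ar : Λ → ℕ} {Sig : Type} {arP : Sig → ℕ} {V : Type}

variable [DecidableEq V]

variable {Λ : Type} {ar : Λ → ℕ} {sVar : Type}

/-- The unary modal operator `ℓ` is `k`-bounded. -/
def KBounded1 (S : LambdaStructure Λ ar) (ℓ : Λ) (k : ℕ) : Prop :=
  ∀ (X : Type) (A : Set X) (t : S.T X),
    t ∈ S.lift ℓ X (fun _ => A) ↔
      ∃ B : Set X, B ⊆ A ∧ B.Finite ∧ B.ncard ≤ k ∧ t ∈ S.lift ℓ X (fun _ => B)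

/-- Los-type characterisation of membership in an admissible set. -/
theorem mem_admSet_out {I : Type} (𝔘 : Ultrafilter I) (X : I → Type)
    (A : ∀ i, Set (X i)) (x : ∀ i, X i) :
    upMk 𝔘 X x ∈ admSet 𝔘 X A ↔ ∀ᶠ i in (𝔘 : Filter I), x i ∈ A i := Iff.rfl

theorem upMk_eq_iff {I : Type} (𝔘 : Ultrafilter I) (X : I → Type) (x y : ∀ i, X i) :
    upMk 𝔘 X x = upMk 𝔘 X y ↔ ∀ᶠ i in (𝔘 : Filter I), x i = y i :=
  ⟨fun h => Quotient.exact h, fun h => Quotient.sound h⟩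

/-- Compactness step: some `t` over the ultraproduct has the right behaviour on finite sets. -/
theorem exists_fin_behaviour (S : LambdaStructure Λ ar) (hcompact : FinitaryOneStepCompact S)
    {I : Type} (𝔘 : Ultrafilter I) (X : I → Type) (hne : ∀ i, Nonempty (X i)) (t : ∀ i, S.T (X i))
    (out : UProd 𝔘 X → ∀ i, X i) (hout : ∀ c, upMk 𝔘 X (out c) = c) :
    ∃ u : S.T (UProd 𝔘 X), ∀ (ℓ : Λ) (B : Finset (UProd 𝔘 X)),
      u ∈ S.lift ℓ _ (fun _ => (B : Set (UProd 𝔘 X))) ↔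
        ∀ᶠ i in (𝔘 : Filter I), t i ∈ S.lift ℓ (X i) (fun _ => (fun b => out b i) '' B) := by
  classical
  set P : Λ × Finset (UProd 𝔘 X) → Prop := fun l =>
    ∀ᶠ i in (𝔘 : Filter I), t i ∈ S.lift l.1 (X i) (fun _ => (fun b => out b i) '' l.2) with hP
  let lit : Λ × Finset (UProd 𝔘 X) → PropForm (Λ × Finset (UProd 𝔘 X)) := fun l =>
    if P l then .var l else .imp (.var l) .bot
  have hlit : ∀ (u : S.T (UProd 𝔘 X)) l, osSatFin S _ u (lit l) ↔
      (u ∈ S.lift l.1 _ (fun _ => (l.2 : Set (UProd 𝔘 X))) ↔ P l) := by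
    intro u l
    by_cases h : P l <;> simp [lit, h, osSatFin, pEval]
  obtain ⟨u, hu⟩ := hcompact (UProd 𝔘 X) (Set.range lit) (by
    intro Φ₀ hsub hfin
    obtain ⟨s, rfl⟩ : ∃ s : Finset (Λ × Finset (UProd 𝔘 X)), Φ₀ = lit '' s := by
      choose g hg using fun a : Φ₀ => hsub a.2
      have := hfin.to_subtype
      refine ⟨(Set.finite_range g).toFinset, ?_⟩
      ext a
      simp only [Set.Finite.coe_toFinset, ← Set.range_comp, Set.mem_range, Function.comp, hg]
      simp
    let F : Finset (UProd 𝔘 X) := s.biUnion Prod.snd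
    have e1 : ∀ᶠ i in (𝔘 : Filter I), ∀ l ∈ s,
        (t i ∈ S.lift l.1 (X i) (fun _ => (fun b => out b i) '' l.2) ↔ P l) := by
      rw [Filter.eventually_all_finset]
      intro l _
      by_cases h : P l
      · exact Filter.Eventually.mono h fun i hi => iff_of_true hi h
      · simpa [h] using Ultrafilter.eventually_not.2 h
    have e2 : ∀ᶠ i in (𝔘 : Filter I), ∀ b ∈ F, ∀ c ∈ F, out b i = out c i → b = c := by
      rw [Filter.eventually_all_finset]
      intro b _
      rw [Filter.eventually_all_finset]
      intro c _
      by_cases h : b = c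
      · simp [h]
      · have : ¬ ∀ᶠ i in (𝔘 : Filter I), out b i = out c i := by
          rw [← upMk_eq_iff, hout, hout]; exact h
        simpa [h] using Ultrafilter.eventually_not.2 this
    have e3 : ∀ᶠ i in (𝔘 : Filter I), (∀ z, z ∈ F) → ∀ y : X i, ∃ b ∈ F, y = out b i := by
      by_cases hF : ∀ z, z ∈ F
      · by_contra hcon
        have hcon := Ultrafilter.eventually_not.2 hcon
        have : ∀ i, ∃ y : X i, (¬ ((∀ z, z ∈ F) → ∀ y : X i, ∃ b ∈ F, y = out b i)) →
            ∀ b ∈ F, y ≠ out b i := by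
          intro i
          by_cases h : ((∀ z, z ∈ F) → ∀ y : X i, ∃ b ∈ F, y = out b i)
          · exact ⟨(hne i).some, fun h' => absurd h h'⟩
          · have h2 := h
            push Not at h2
            obtain ⟨-, y, hy⟩ := h2
            exact ⟨y, fun _ => hy⟩
        choose y hy using this
        have hmem : upMk 𝔘 X y ∈ F := hF _
        have : ∀ᶠ i in (𝔘 : Filter I), y i = out (upMk 𝔘 X y) i := by
          rw [← upMk_eq_iff, hout]
        obtain ⟨i, hi1, hi2⟩ := (this.and hcon).exists
        exact hy i hi2 _ hmem hi1
      · exact Filter.Eventually.of_forall fun i h => absurd h hF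
    obtain ⟨i, h1, h2, h3⟩ := (e1.and (e2.and e3)).exists
    have hf : ∀ y : X i, ∃ z : UProd 𝔘 X, ∀ b ∈ F, (z = b ↔ y = out b i) := by
      intro y
      by_cases hy : ∃ b ∈ F, y = out b i
      · obtain ⟨b, hb, rfl⟩ := hy
        refine ⟨b, fun c hc => ⟨fun h => by rw [h], fun h => h2 b hb c hc h⟩⟩
      · have : ∃ z, z ∉ F := by
          by_contra hcon
          push Not at hcon
          exact hy (h3 hcon y)
        obtain ⟨z, hz⟩ := this
        refine ⟨z, fun b hb => ⟨fun h => absurd (h ▸ hb) hz, fun h => absurd ⟨b, hb, h⟩ hy⟩⟩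
    choose f hf using hf
    refine ⟨S.map f (t i), ?_⟩
    rintro _ ⟨l, hl, rfl⟩
    rw [hlit, S.natural, ← h1 l hl]
    have : f ⁻¹' (l.2 : Set (UProd 𝔘 X)) = (fun b => out b i) '' l.2 := by
      ext y
      have hF : ∀ b ∈ l.2, b ∈ F := fun b hb => Finset.mem_biUnion.2 ⟨l, hl, hb⟩
      constructor
      · intro hy
        exact ⟨f y, hy, ((hf y _ (hF _ hy)).1 rfl).symm⟩
      · rintro ⟨b, hb, hby⟩
        have := (hf y b (hF b hb)).2 hby.symm
        change f y ∈ l.2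
        rw [this]; exact hb
    rw [this])
  exact ⟨u, fun ℓ B => (hlit u (ℓ, B)).1 (hu _ ⟨_, rfl⟩)⟩

/-- **Existence of quasi-ultraproducts under finitary one-step compactness and
boundedness** (Thm. 5.7): if a `Λ`-structure (with all operators unary) is finitary one-step
compact and every operator is `k_♥`-bounded for some `k_♥ ∈ ℕ`, then for every ultrafilter
`𝔘` and every family of `T`-coalgebras on nonempty sets there is a coalgebra structure on
the ultraproduct making it a quasi-ultraproduct. -/
theorem qup_exists_of_finitary_onestep_compact (S : LambdaStructure Λ ar)
    (hunary : ∀ ℓ : Λ, ar ℓ = 1)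
    (hcompact : FinitaryOneStepCompact S)
    (hbounded : ∀ ℓ : Λ, ∃ k : ℕ, KBounded1 S ℓ k)
    {I : Type} (𝔘 : Ultrafilter I) (X : I → Type) (hne : ∀ i, Nonempty (X i))
    (ξi : ∀ i, X i → S.T (X i)) :
    ∃ ξ : UProd 𝔘 X → S.T (UProd 𝔘 X), IsQUPCoalg S 𝔘 X ξi ξ := by
  classical
  let out : UProd 𝔘 X → ∀ i, X i := fun c => Quotient.out c
  have hout : ∀ c, upMk 𝔘 X (out c) = c := fun c => Quotient.out_eq c
  choose ξ hξ using fun c : UProd 𝔘 X =>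
    exists_fin_behaviour S hcompact 𝔘 X hne (fun i => ξi i (out c i)) out hout
  refine ⟨ξ, fun A x ℓ => ?_⟩
  obtain ⟨k, hk⟩ := hbounded ℓ
  have hx : ∀ᶠ i in (𝔘 : Filter I), out (upMk 𝔘 X x) i = x i := by
    rw [← upMk_eq_iff, hout]
  change _ ↔ ∀ᶠ i in (𝔘 : Filter I), ξi i (x i) ∈ S.lift ℓ (X i) (fun _ => A i)
  rw [hk]
  constructor
  · rintro ⟨B, hBA, hBf, hBk, hB⟩
    lift B to Finset (UProd 𝔘 X) using hBf
    rw [hξ] at hB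
    have hsub : ∀ᶠ i in (𝔘 : Filter I), ∀ b ∈ B, out b i ∈ A i := by
      rw [Filter.eventually_all_finset]
      intro b hb
      rw [← mem_admSet_out, hout]
      exact hBA hb
    filter_upwards [hB, hsub, hx] with i h1 h2 h3
    rw [h3] at h1
    rw [hk]
    refine ⟨_, ?_, B.finite_toSet.image _, (Set.ncard_image_le B.finite_toSet).trans hBk, h1⟩
    rintro _ ⟨b, hb, rfl⟩
    exact h2 b hb
  · intro h
    have h1 : ∀ᶠ i in (𝔘 : Filter I), ∃ n ∈ Finset.range (k + 1), ∃ c : Fin n → X i,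
        (∀ j, c j ∈ A i) ∧ ξi i (x i) ∈ S.lift ℓ (X i) (fun _ => Set.range c) := by
      filter_upwards [h] with i hi
      obtain ⟨C, hCA, hCf, hCk, hC⟩ := (hk _ _ _).1 hi
      have := hCf.to_subtype
      let e : Fin C.ncard ≃ C := (Finite.equivFinOfCardEq (Nat.card_coe_set_eq C)).symm
      refine ⟨C.ncard, by simp; omega, fun j => e j, fun j => hCA (e j).2, ?_⟩
      have : Set.range (fun j => (e j : X i)) = C := by
        ext y
        constructor
        · rintro ⟨j, rfl⟩; exact (e j).2
        · intro hy; exact ⟨e.symm ⟨y, hy⟩, by simp⟩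
      rw [this]; exact hC
    have h2 : ∃ n ∈ Finset.range (k + 1), ∀ᶠ i in (𝔘 : Filter I), ∃ c : Fin n → X i,
        (∀ j, c j ∈ A i) ∧ ξi i (x i) ∈ S.lift ℓ (X i) (fun _ => Set.range c) := by
      by_contra hcon
      have h3 := (Filter.eventually_all_finset (l := (𝔘 : Filter I)) (Finset.range (k + 1))).2
        fun n hn => Ultrafilter.eventually_not.2 fun h => hcon ⟨n, hn, h⟩
      obtain ⟨i, ⟨n, hn, hi⟩, hi'⟩ := (h1.and h3).exists
      exact hi' n hn hi
    obtain ⟨n, hn, h2⟩ := h2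
    have h3 : ∀ i, ∃ c : Fin n → X i, (∃ c : Fin n → X i, (∀ j, c j ∈ A i) ∧
        ξi i (x i) ∈ S.lift ℓ (X i) (fun _ => Set.range c)) → (∀ j, c j ∈ A i) ∧
        ξi i (x i) ∈ S.lift ℓ (X i) (fun _ => Set.range c) := by
      intro i
      by_cases hc : ∃ c : Fin n → X i, (∀ j, c j ∈ A i) ∧
          ξi i (x i) ∈ S.lift ℓ (X i) (fun _ => Set.range c)
      · obtain ⟨c, hc⟩ := hc; exact ⟨c, fun _ => hc⟩
      · exact ⟨fun _ => (hne i).some, fun h => absurd h hc⟩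
    choose c hc using h3
    have h4 := h2.mono fun i hi => hc i hi
    let d : Fin n → UProd 𝔘 X := fun j => upMk 𝔘 X fun i => c i j
    let B : Finset (UProd 𝔘 X) := Finset.univ.image d
    refine ⟨B, ?_, B.finite_toSet, ?_, ?_⟩
    · intro b hb
      obtain ⟨j, -, rfl⟩ := Finset.mem_image.1 hb
      exact (mem_admSet_out 𝔘 X A _).2 (h4.mono fun i hi => hi.1 j)
    · rw [Set.ncard_coe_finset]
      have : B.card ≤ n := Finset.card_image_le.trans (by simp)
      have := Finset.mem_range.1 hn
      omega
    · rw [hξ]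
      have h5 : ∀ᶠ i in (𝔘 : Filter I), ∀ j, out (d j) i = c i j := by
        rw [Filter.eventually_all]
        intro j
        rw [← upMk_eq_iff 𝔘 X (out (d j)) (fun i => c i j), hout]
      filter_upwards [h4, h5, hx] with i a1 a2 a3
      rw [a3]
      have : (fun b => out b i) '' (B : Set (UProd 𝔘 X)) = Set.range (c i) := by
        simp only [B, Finset.coe_image, Finset.coe_univ, Set.image_univ, ← Set.range_comp]
        congr 1
        funext j
        exact a2 j
      rw [this]; exact a1.2

end CPL
end

section
/- Downward Löwenheim–Skolem Theorem (ω-bounded case): Over any Λ-structure (with all operators unary) that is finitary one-step compact and in which every operator is ω-bounded, CPL(Λ,Σ) satisfies the downward Löwenheim–Skolem theorem: every coalgebraic model of infinite cardinality κ has, for every infinite cardinal λ ≤ κ (with λ at least the cardinality of the language), an elementary substructure of cardinality λ. -/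
namespace CPL

variable {Λ : Type} {ar : Λ → ℕ} {Sig : Type} {arP : Sig → ℕ} {V : Type}

variable [DecidableEq V]

variable {Λ : Type} {ar : Λ → ℕ} {sVar : Type}

/-- The unary modal operator `ℓ` is `ω`-bounded. -/
def OmegaBounded1 (S : LambdaStructure Λ ar) (ℓ : Λ) : Prop :=
  ∀ (X : Type) (A : Set X) (t : S.T X),
    t ∈ S.lift ℓ X (fun _ => A) ↔
      ∃ B : Set X, B ⊆ A ∧ B.Finite ∧ t ∈ S.lift ℓ X (fun _ => B)

/-- Satisfaction depends only on the free variables. -/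
theorem sat_congr [DecidableEq V] (S : LambdaStructure Λ ar) {C : Type} (γ : C → S.T C)
    (I : (P : Sig) → (Fin (arP P) → C) → Prop) (φ : Formula Λ ar Sig arP V) :
    ∀ v w : V → C, (∀ z ∈ φ.freeVars, v z = w z) → (Sat S γ I v φ ↔ Sat S γ I w φ) := by
  have upd : ∀ (v w : V → C) (s : Set V) (x : V) (c : C), (∀ z ∈ s \ {x}, v z = w z) →
      ∀ z ∈ s, Function.update v x c z = Function.update w x c z := by
    intro v w s x c h z hz
    by_cases hzx : z = x
    · subst hzx; simp
    · simp [hzx, h z ⟨hz, hzx⟩]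
  induction φ with
  | eq a b =>
    intro v w h
    simp only [Sat]
    rw [h a (by simp [Formula.freeVars]), h b (by simp [Formula.freeVars])]
  | pred P xs =>
    intro v w h
    simp only [Sat]
    have : (fun i => v (xs i)) = fun i => w (xs i) := by
      funext i
      exact h _ (by simp [Formula.freeVars])
    rw [this]
  | bot => intro v w h; simp only [Sat]
  | imp φ ψ ih1 ih2 =>
    intro v w h
    simp only [Sat]
    rw [ih1 v w fun z hz => h z (Or.inl hz), ih2 v w fun z hz => h z (Or.inr hz)]
  | all x φ ih =>
    intro v w h
    simp only [Sat]
    exact forall_congr' fun c => ih _ _ (upd v w _ x c h)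
  | heart x ℓ ys φs ih =>
    intro v w h
    simp only [Sat]
    have h1 : v x = w x := h x (by simp [Formula.freeVars])
    have h2 : (fun i => {c : C | Sat S γ I (Function.update v (ys i) c) (φs i)}) =
        fun i => {c : C | Sat S γ I (Function.update w (ys i) c) (φs i)} := by
      funext i
      ext c
      refine ih i _ _ (upd v w _ (ys i) c ?_)
      intro z hz
      exact h z (Or.inr (Set.mem_iUnion.2 ⟨i, hz⟩))
    rw [h1, h2]

theorem freeVars_finite (φ : Formula Λ ar Sig arP V) : φ.freeVars.Finite := by
  induction φ with
  | eq a b => simp [Formula.freeVars]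
  | pred P xs => exact Set.finite_range xs
  | bot => simp [Formula.freeVars]
  | imp φ ψ ih1 ih2 => exact ih1.union ih2
  | all x φ ih => exact ih.subset Set.diff_subset
  | heart x ℓ ys φs ih =>
    exact (Set.finite_iUnion fun i => (ih i).subset Set.diff_subset).insert x

/-- `W` contains the witnesses required for `φ` under the valuation `v`. -/
def GoodWit [DecidableEq V] (S : LambdaStructure Λ ar) {C : Type} (γ : C → S.T C)
    (I : (P : Sig) → (Fin (arP P) → C) → Prop) (v : V → C) (W : Set C) :
    Formula Λ ar Sig arP V → Prop
  | .all x φ => (∀ c ∈ W, Sat S γ I (Function.update v x c) φ) →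
      ∀ c, Sat S γ I (Function.update v x c) φ
  | .heart x ℓ ys φs => Sat S γ I v (.heart x ℓ ys φs) →
      ∃ B : Set C, B ⊆ W ∧ B.Finite ∧
        (∀ i, ∀ c ∈ B, Sat S γ I (Function.update v (ys i) c) (φs i)) ∧
        γ (v x) ∈ S.lift ℓ C fun _ => B
  | _ => True

theorem const_of_unary {ar : Λ → ℕ} {ℓ : Λ} (h : ar ℓ = 1) {α : Type} (f : Fin (ar ℓ) → α) :
    ∃ a, f = fun _ => a := by
  refine ⟨f ⟨0, by omega⟩, ?_⟩
  funext i
  congr 1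
  ext
  have := i.2
  simp only
  omega

theorem goodWit_exists [DecidableEq V] (S : LambdaStructure Λ ar)
    (hunary : ∀ ℓ : Λ, ar ℓ = 1) (homega : ∀ ℓ : Λ, OmegaBounded1 S ℓ)
    {C : Type} (c0 : C) (γ : C → S.T C)
    (I : (P : Sig) → (Fin (arP P) → C) → Prop) (φ : Formula Λ ar Sig arP V) (v : V → C) :
    ∃ W : ℕ → C, GoodWit S γ I v (Set.range W) φ := by
  cases φ with
  | all x φ =>
    by_cases h : ∀ c, Sat S γ I (Function.update v x c) φ
    · exact ⟨fun _ => c0, fun _ => h⟩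
    · push Not at h
      obtain ⟨c, hc⟩ := h
      exact ⟨fun _ => c, fun h => absurd (h c ⟨0, rfl⟩) hc⟩
  | heart x ℓ ys φs =>
    by_cases h : Sat S γ I v (.heart x ℓ ys φs)
    · have h' := h
      simp only [Sat] at h'
      obtain ⟨A, hA⟩ := const_of_unary (hunary ℓ)
        (fun i => {c : C | Sat S γ I (Function.update v (ys i) c) (φs i)})
      rw [hA] at h'
      obtain ⟨B, hBA, hBf, hB⟩ := (homega ℓ C A _).1 h'
      obtain ⟨W, hW⟩ := (hBf.insert c0).countable.exists_eq_range (Set.insert_nonempty _ _)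
      refine ⟨W, fun _ => ⟨B, ?_, hBf, ?_, hB⟩⟩
      · rw [← hW]; exact Set.subset_insert _ _
      · intro i c hc
        have := congrFun hA i
        have h3 : c ∈ A := hBA hc
        rw [← this] at h3
        exact h3
    · exact ⟨fun _ => c0, fun h' => absurd h' h⟩
  | eq a b => exact ⟨fun _ => c0, trivial⟩
  | pred P xs => exact ⟨fun _ => c0, trivial⟩
  | bot => exact ⟨fun _ => c0, trivial⟩
  | imp φ ψ => exact ⟨fun _ => c0, trivial⟩

theorem goodWit_congr [DecidableEq V] (S : LambdaStructure Λ ar)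
    {C : Type} (γ : C → S.T C)
    (I : (P : Sig) → (Fin (arP P) → C) → Prop) (φ : Formula Λ ar Sig arP V) (v w : V → C)
    (h : ∀ z ∈ φ.freeVars, v z = w z) (W : Set C) (hv : GoodWit S γ I v W φ) :
    GoodWit S γ I w W φ := by
  have upd : ∀ (s : Set V) (x : V) (c : C), (∀ z ∈ s \ {x}, v z = w z) →
      ∀ z ∈ s, Function.update v x c z = Function.update w x c z := by
    intro s x c h z hz
    by_cases hzx : z = x
    · subst hzx; simp
    · simp [hzx, h z ⟨hz, hzx⟩]
  cases φ with
  | all x φ =>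
    have key := fun c => sat_congr S γ I φ _ _ (upd _ x c h)
    intro h1 c
    exact (key c).1 (hv (fun c hc => (key c).2 (h1 c hc)) c)
  | heart x ℓ ys φs =>
    intro h1
    obtain ⟨B, h2, h3, h4, h5⟩ := hv ((sat_congr S γ I _ _ _ h).2 h1)
    refine ⟨B, h2, h3, fun i c hc => ?_, ?_⟩
    · refine (sat_congr S γ I (φs i) _ _ (upd _ (ys i) c ?_)).1 (h4 i c hc)
      intro z hz
      exact h z (Or.inr (Set.mem_iUnion.2 ⟨i, hz⟩))
    · rw [← h x (by simp [Formula.freeVars])]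
      exact h5
  | eq a b => trivial
  | pred P xs => trivial
  | bot => trivial
  | imp φ ψ => trivial

/-- A closed set of witnesses of the prescribed cardinality. -/
theorem exists_closed [DecidableEq V] (S : LambdaStructure Λ ar)
    (hunary : ∀ ℓ : Λ, ar ℓ = 1) (homega : ∀ ℓ : Λ, OmegaBounded1 S ℓ)
    (C : Type) (γ : C → S.T C) (I : (P : Sig) → (Fin (arP P) → C) → Prop) (c0 : C)
    (lam : Cardinal) (hlam0 : Cardinal.aleph0 ≤ lam) (hlamC : lam ≤ Cardinal.mk C)
    (hlang : Cardinal.mk (Formula Λ ar Sig arP V) ≤ lam) :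
    ∃ Y : Set C, Cardinal.mk Y = lam ∧
      ∀ (φ : Formula Λ ar Sig arP V) (v : V → Y), GoodWit S γ I (fun x => (v x : C)) Y φ := by
  classical
  choose W hW using goodWit_exists (V := V) S hunary homega c0 γ I
  obtain ⟨s, hs⟩ := Cardinal.le_mk_iff_exists_set.1 hlamC
  let L : FirstOrder.Language.{0, 0} :=
    ⟨fun _ => Formula Λ ar Sig arP V × ℕ, fun _ => Empty⟩
  let e : Formula Λ ar Sig arP V → List V := fun φ => (freeVars_finite φ).toFinset.toList
  let val : (φ : Formula Λ ar Sig arP V) → (n : ℕ) → (Fin n → C) → V → C := fun φ n cs z =>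
    if h : (e φ).idxOf z < n then cs ⟨(e φ).idxOf z, h⟩ else c0
  letI : L.Structure C :=
    { funMap := fun {n} f cs => W f.1 (val f.1 n cs) f.2
      RelMap := fun {n} r => r.elim }
  let Y := FirstOrder.Language.Substructure.closure L s
  have hsub : s ⊆ (Y : Set C) := FirstOrder.Language.Substructure.subset_closure
  refine ⟨(Y : Set C), le_antisymm ?_ ?_, ?_⟩
  · have h1 := FirstOrder.Language.Substructure.lift_card_closure_le (L := L) (s := s)
    rw [Cardinal.lift_id, Cardinal.lift_id, Cardinal.lift_id, hs] at h1
    refine h1.trans (max_le hlam0 ?_)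
    refine Cardinal.add_le_of_le hlam0 le_rfl ?_
    have h2 : Cardinal.mk (Σ i, L.Functions i) =
        Cardinal.mk (ℕ × (Formula Λ ar Sig arP V × ℕ)) :=
      Cardinal.mk_congr (Equiv.sigmaEquivProd ℕ (Formula Λ ar Sig arP V × ℕ))
    rw [h2]
    simp only [Cardinal.mk_prod, Cardinal.lift_id, Cardinal.mk_nat]
    exact Cardinal.mul_le_of_le hlam0 hlam0 (Cardinal.mul_le_of_le hlam0 hlang hlam0)
  · rw [← hs]
    exact Cardinal.mk_le_mk_of_subset hsub
  · intro φ v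
    have hsubW : ∀ W' : Set C, W' ⊆ (Y : Set C) → GoodWit S γ I (fun x => (v x : C)) W' φ →
        GoodWit S γ I (fun x => (v x : C)) (Y : Set C) φ := by
      intro W' hW' hg
      cases φ with
      | all x φ => exact fun h => hg fun c hc => h c (hW' hc)
      | heart x ℓ ys φs =>
        intro h
        obtain ⟨B, h1, h2⟩ := hg h
        exact ⟨B, h1.trans hW', h2⟩
      | eq a b => trivial
      | pred P xs => trivial
      | bot => trivial
      | imp φ ψ => trivial
    let cs : Fin (e φ).length → C := fun i => v ((e φ).get i)
    have hcs : ∀ i, cs i ∈ Y := fun i => (v _).2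
    refine hsubW (Set.range (W φ (val φ _ cs))) ?_ ?_
    · rintro _ ⟨k, rfl⟩
      exact Y.fun_mem (n := (e φ).length) (show L.Functions (e φ).length from (φ, k)) cs hcs
    · refine goodWit_congr S γ I φ _ _ ?_ _ (hW φ (val φ _ cs))
      intro z hz
      have hm : z ∈ e φ := by simpa [e] using hz
      have hlt := List.idxOf_lt_length_iff.2 hm
      simp only [val, dif_pos hlt, cs]
      simp

/-- Transfer of one element of `T C` to `T Y` for an infinite `Y`, by compactness. -/
theorem exists_transfer (S : LambdaStructure Λ ar) (hcompact : FinitaryOneStepCompact S)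
    (C : Type) (Y : Set C) (hY : Infinite Y) (t : S.T C) :
    ∃ u : S.T Y, ∀ (ℓ : Λ) (B : Finset Y),
      (u ∈ S.lift ℓ Y fun _ => (B : Set Y)) ↔ t ∈ S.lift ℓ C fun _ => Subtype.val '' (B : Set Y) := by
  classical
  let P : Λ × Finset Y → Prop := fun p => t ∈ S.lift p.1 C fun _ => Subtype.val '' (p.2 : Set Y)
  let g : Λ × Finset Y → PropForm (Λ × Finset Y) := fun p =>
    if P p then .var p else .imp (.var p) .bot
  have hg : ∀ (u : S.T Y) p, osSatFin S Y u (g p) ↔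
      ((u ∈ S.lift p.1 Y fun _ => (p.2 : Set Y)) ↔ P p) := by
    intro u p
    by_cases hp : P p <;> simp [g, hp, osSatFin, pEval]
  obtain ⟨u, hu⟩ := hcompact Y (Set.range g) (by
    intro Φ₀ hsub hfin
    obtain ⟨Q, -, hQf, hQ⟩ := (Set.exists_subset_image_finite_and (f := g) (s := Set.univ)
      (p := fun t => t = Φ₀)).1 ⟨Φ₀, by simpa using hsub, hfin, rfl⟩
    let F : Finset Y := hQf.toFinset.biUnion fun p => p.2
    obtain ⟨y0, hy0⟩ := Infinite.exists_notMem_finset F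
    let f : C → Y := fun c => if h : ∃ y ∈ F, (y : C) = c then h.choose else y0
    refine ⟨S.map f t, ?_⟩
    rw [← hQ]
    rintro _ ⟨p, hp, rfl⟩
    rw [hg, S.natural]
    have hpF : p.2 ⊆ F := Finset.subset_biUnion_of_mem (fun p : Λ × Finset Y => p.2)
      (hQf.mem_toFinset.2 hp)
    have : f ⁻¹' (p.2 : Set Y) = Subtype.val '' (p.2 : Set Y) := by
      ext c
      simp only [Set.mem_preimage, Set.mem_image, Finset.mem_coe]
      by_cases h : ∃ y ∈ F, (y : C) = c
      · have hc := h.choose_spec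
        simp only [f, dif_pos h]
        constructor
        · intro h1
          exact ⟨_, h1, hc.2⟩
        · rintro ⟨y, hy, hyc⟩
          have : h.choose = y := Subtype.ext (hc.2.trans hyc.symm)
          rw [this]; exact hy
      · simp only [f, dif_neg h]
        constructor
        · intro h1
          exact absurd (hpF h1) hy0
        · rintro ⟨y, hy, hyc⟩
          exact absurd ⟨y, hpF hy, hyc⟩ h
    rw [this])
  exact ⟨u, fun ℓ B => (hg u (ℓ, B)).1 (hu _ ⟨(ℓ, B), rfl⟩)⟩

/-- **Downward Löwenheim–Skolem Theorem, `ω`-bounded case** (Thm. 5.9): over any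
`Λ`-structure (with all operators unary) that is finitary one-step compact and all of whose
operators are `ω`-bounded, every coalgebraic model of infinite cardinality `κ` has, for every
infinite cardinal `λ ≤ κ` that is at least the cardinality of the language, an elementary
substructure of cardinality `λ` (the coalgebra structure on the substructure need not be a
subcoalgebra). -/
theorem downward_lowenheim_skolem_omega_bounded [DecidableEq V]
    (S : LambdaStructure Λ ar)
    (hunary : ∀ ℓ : Λ, ar ℓ = 1)
    (hcompact : FinitaryOneStepCompact S)
    (homega : ∀ ℓ : Λ, OmegaBounded1 S ℓ)
    (C : Type) (γ : C → S.T C) (I : (P : Sig) → (Fin (arP P) → C) → Prop)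
    (hinf : Cardinal.aleph0 ≤ Cardinal.mk C)
    (lam : Cardinal) (hlam0 : Cardinal.aleph0 ≤ lam) (hlamC : lam ≤ Cardinal.mk C)
    (hlang : Cardinal.mk (Formula Λ ar Sig arP V) ≤ lam) :
    ∃ (Y : Set C) (ζ : Y → S.T Y),
      Cardinal.mk Y = lam ∧
      ∀ (φ : Formula Λ ar Sig arP V) (v : V → Y),
        Sat S ζ (fun P cs => I P fun j => ((cs j : Y) : C)) v φ ↔
          Sat S γ I (fun x => ((v x : Y) : C)) φ := by
  have hne : Nonempty C := Cardinal.mk_ne_zero_iff.1 (fun h => by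
    rw [h] at hinf
    exact absurd hinf (not_le.2 Cardinal.aleph0_pos))
  obtain ⟨c0⟩ := hne
  obtain ⟨Y, hYc, hY⟩ := exists_closed S hunary homega C γ I c0 lam hlam0 hlamC hlang
  have hYinf : Infinite Y := Cardinal.infinite_iff.2 (by rw [hYc]; exact hlam0)
  choose ζ hζ using fun y : Y => exists_transfer S hcompact C Y hYinf (γ y)
  refine ⟨Y, ζ, hYc, ?_⟩
  have upd : ∀ (v : V → Y) (x : V) (c : Y),
      (fun z => ((Function.update v x c z : Y) : C)) =
        Function.update (fun z => (v z : C)) x (c : C) := by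
    intro v x c
    funext z
    by_cases hz : z = x
    · subst hz; simp
    · simp [hz]
  intro φ
  induction φ with
  | eq a b => intro v; simp only [Sat]; exact Subtype.ext_iff
  | pred P xs => intro v; simp only [Sat]
  | bot => intro v; simp only [Sat]
  | imp φ ψ ih1 ih2 => intro v; simp only [Sat]; rw [ih1, ih2]
  | all x φ ih =>
    intro v
    simp only [Sat]
    have ih' := fun c : Y => ih (Function.update v x c)
    simp only [upd] at ih'
    constructor
    · intro h
      exact hY (.all x φ) v fun c hc => (ih' ⟨c, hc⟩).1 (h ⟨c, hc⟩)
    · intro h c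
      exact (ih' c).2 (h c)
  | heart x ℓ ys φs ih =>
    intro v
    have ih' := fun i (c : Y) => ih i (Function.update v (ys i) c)
    simp only [upd] at ih'
    have i0 : Fin (ar ℓ) := ⟨0, by rw [hunary]; exact Nat.one_pos⟩
    constructor
    · intro h
      simp only [Sat] at h ⊢
      obtain ⟨A, hA⟩ := const_of_unary (hunary ℓ) (fun i => {c : Y |
        Sat S ζ (fun P cs => I P fun j => ((cs j : Y) : C)) (Function.update v (ys i) c) (φs i)})
      obtain ⟨A', hA'⟩ := const_of_unary (hunary ℓ) (fun i => {c : C |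
        Sat S γ I (Function.update (fun x => (v x : C)) (ys i) c) (φs i)})
      rw [hA] at h
      rw [hA']
      obtain ⟨B, hBA, hBf, hB⟩ := (homega ℓ _ A _).1 h
      refine (homega ℓ _ A' _).2 ⟨Subtype.val '' B, ?_, hBf.image _, ?_⟩
      · rintro _ ⟨c, hc, rfl⟩
        have h1 : c ∈ A := hBA hc
        rw [← congrFun hA i0] at h1
        rw [← congrFun hA' i0]
        exact (ih' i0 c).1 h1
      · have := (hζ (v x) ℓ hBf.toFinset).1 (by simpa using hB)
        simpa using this
    · intro h
      obtain ⟨B, hBY, hBf, hBs, hB⟩ := hY (.heart x ℓ ys φs) v h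
      simp only [Sat]
      obtain ⟨A, hA⟩ := const_of_unary (hunary ℓ) (fun i => {c : Y |
        Sat S ζ (fun P cs => I P fun j => ((cs j : Y) : C)) (Function.update v (ys i) c) (φs i)})
      rw [hA]
      have hfin : (Subtype.val ⁻¹' B : Set Y).Finite :=
        hBf.preimage Subtype.val_injective.injOn
      refine (homega ℓ _ A _).2 ⟨Subtype.val ⁻¹' B, ?_, hfin, ?_⟩
      · intro c hc
        rw [← congrFun hA i0]
        exact (ih' i0 c).2 (hBs i0 c hc)
      · have := (hζ (v x) ℓ hfin.toFinset).2 (by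
          rw [Set.Finite.coe_toFinset, Subtype.image_preimage_coe, Set.inter_eq_right.2 hBY]
          exact hB)
        simpa using this

end CPL
end

section
/- Let Y be an infinite subset of a set X, let τ : sVar → 𝒫_fin(Y) be a valuation of schematic variables by finite subsets of Y, and let A ∈ Prop(sVar) be a propositional formula over sVar. Then Y ⊨ Aτ if and only if X ⊨ Aτ, i.e. the extension of A under τ in the Boolean algebra 𝒫(Y) equals Y precisely when its extension under τ in the Boolean algebra 𝒫(X) equals X. -/
namespace CPL

theorem mem_pEval_sub {X sVar : Type} (Y : Set X) (τ : sVar → Set X) (A : PropForm sVar) (y : Y) :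
    y ∈ pEval (fun p => {y : Y | (y : X) ∈ τ p}) A ↔ (y : X) ∈ pEval τ A := by
  induction A with
  | var a => simp [pEval]
  | bot => simp [pEval]
  | imp A B ihA ihB => simp only [pEval, Set.mem_union, Set.mem_compl_iff, ihA, ihB]

theorem exists_finite_support {X sVar : Type} (Y : Set X) (τ : sVar → Set X)
    (hfin : ∀ p, (τ p).Finite) (hsub : ∀ p, τ p ⊆ Y) (A : PropForm sVar) :
    ∃ F : Set X, F.Finite ∧ F ⊆ Y ∧
      ∀ x y, x ∉ F → y ∉ F → (x ∈ pEval τ A ↔ y ∈ pEval τ A) := by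
  induction A with
  | var a => exact ⟨τ a, hfin a, hsub a, fun x y hx hy => by simp [pEval, hx, hy]⟩
  | bot => exact ⟨∅, Set.finite_empty, Set.empty_subset _, fun x y _ _ => by simp [pEval]⟩
  | imp A B ihA ihB =>
    obtain ⟨F, hF, hFY, h1⟩ := ihA
    obtain ⟨G, hG, hGY, h2⟩ := ihB
    refine ⟨F ∪ G, hF.union hG, Set.union_subset hFY hGY, fun x y hx hy => ?_⟩
    rw [Set.mem_union, not_or] at hx hy
    simp only [pEval, Set.mem_union, Set.mem_compl_iff, h1 x y hx.1 hy.1, h2 x y hx.2 hy.2]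

/-- **Lemma 5.10**: let `Y` be an infinite subset of `X`, let `τ : sVar → 𝒫_fin(Y)` be a
valuation of the schematic variables by finite subsets of `Y`, and let `A` be a propositional
formula over `sVar`.  Then `Y ⊨ Aτ` iff `X ⊨ Aτ`: the extension of `A` under `τ` in the
Boolean algebra `𝒫(Y)` is all of `Y` precisely when its extension under `τ` in the Boolean
algebra `𝒫(X)` is all of `X`. -/
theorem prop_eval_finite_transfer {X : Type} {sVar : Type}
    (Y : Set X) (hY : Y.Infinite)
    (τ : sVar → Set X) (hfin : ∀ p, (τ p).Finite) (hsub : ∀ p, τ p ⊆ Y)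
    (A : PropForm sVar) :
    pEval (fun p => {y : Y | (y : X) ∈ τ p}) A = Set.univ ↔ pEval τ A = Set.univ := by
  simp only [Set.eq_univ_iff_forall, mem_pEval_sub]
  refine ⟨fun h x => ?_, fun h y => h y⟩
  by_cases hx : x ∈ Y
  · exact h ⟨x, hx⟩
  · obtain ⟨F, hF, hFY, hA⟩ := exists_finite_support Y τ hfin hsub A
    obtain ⟨y, hyY, hyF⟩ := hY.exists_notMem_finite hF
    exact (hA x y (fun hxF => hx (hFY hxF)) hyF).2 (h ⟨y, hyY⟩)

end CPL
end
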